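/- Let G be a finite non-complete connected simple graph with minimum degree δ(G) and connectivity k(G). Then k(G) ≥ δ(G) · κ_LLY(G). -/

import Mathlib

/-!
Let `S` be a minimum cut. Its complement splits into two parts `A` and `B` with no edge between
them, and some `s ∈ S` has neighbours `x ∈ A` and `y ∈ B` (`exists_cut_structure`). The function
`f = 1_A - 1_B` is `1`-Lipschitz, since there is no edge between `A` and `B`.

For a `1`-Lipschitz `f` and an edge `uv` with `f u - f v = 1`, the easy half of Kantorovich duality
gives `W(μ_u^p, μ_v^p) ≥ 1 + (1 - p) (Δf(u) - Δf(v))`, hence `κ(u, v) ≤ Δf(v) - Δf(u)`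
(`kappaLLY_le`); the limit defining `κ` exists because convexity of `p ↦ W(μ_u^p, μ_v^p)`
makes the quotients nondecreasing in `p`.

Applying this to `xs` and to `sy` and adding, the unknown term `Δf(s)` cancels:
`2 κ ≤ Δf(y) - Δf(x)`. Every neighbour of `x` lies in `A ∪ S`, and `f` drops from `x` only towards
`S`, so `Δf(x) ≥ -|S| / δ`; symmetrically `Δf(y) ≤ |S| / δ` (`neg_card_div_le_lap`). Therefore
`κ ≤ |S| / δ`.
-/

open Filter Finset

attribute [local instance] Classical.propDecidable

variable {V : Type*}

/-- The measure `μ_x^p`. -/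
noncomputable def muP [Fintype V] (G : SimpleGraph V) (p : ℝ) (x : V) : V → ℝ :=
  fun z => if z = x then p else if G.Adj x z then (1 - p) / (G.degree x) else 0

/-- A transport plan between two measures. -/
def IsTransportPlan [Fintype V] (μ₁ μ₂ : V → ℝ) (π : V → V → ℝ) : Prop :=
  (∀ u v, 0 ≤ π u v ∧ π u v ≤ 1) ∧
  (∀ u, ∑ v, π u v = μ₁ u) ∧ (∀ v, ∑ u, π u v = μ₂ v)

/-- The cost of a transport plan. -/
noncomputable def planCost [Fintype V] (G : SimpleGraph V) (π : V → V → ℝ) : ℝ :=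
  ∑ u, ∑ v, (G.dist u v : ℝ) * π u v

/-- The Wasserstein distance between two measures on a graph. -/
noncomputable def Wdist [Fintype V] (G : SimpleGraph V) (μ₁ μ₂ : V → ℝ) : ℝ :=
  sInf {c : ℝ | ∃ π, IsTransportPlan μ₁ μ₂ π ∧ c = planCost G π}

/-- The Lin-Lu-Yau curvature of a pair of vertices. -/
noncomputable def kappaLLY [Fintype V] (G : SimpleGraph V) (x y : V) : ℝ :=
  limUnder (nhdsWithin 1 (Set.Iio (1 : ℝ)))
    (fun p => (1 - Wdist G (muP G p x) (muP G p y) / (G.dist x y)) / (1 - p))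

/-- `κ_LLY^{(i)}(G)`: infimum of the curvature over pairs at distance `i`. -/
noncomputable def kappaLLYscale [Fintype V] (G : SimpleGraph V) (i : ℕ) : ℝ :=
  sInf {k : ℝ | ∃ x y : V, G.dist x y = i ∧ k = kappaLLY G x y}

/-- `κ_LLY(G)`: infimum of the curvature over adjacent pairs. -/
noncomputable def kappaLLYedge [Fintype V] (G : SimpleGraph V) : ℝ :=
  sInf {k : ℝ | ∃ x y : V, G.Adj x y ∧ k = kappaLLY G x y}

/-- The vertex connectivity `k(G)`. -/
noncomputable def vertexConnectivity [Fintype V] (G : SimpleGraph V) : ℕ :=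
  sInf {n : ℕ | ∃ S : Finset V, S.card = n ∧
    (¬ (G.induce ((S : Set V)ᶜ)).Connected ∨ ((S : Set V)ᶜ).Subsingleton)}

/-- The edge connectivity `k'(G)`. -/
noncomputable def edgeConnectivity [Fintype V] (G : SimpleGraph V) : ℕ :=
  sInf {n : ℕ | ∃ F : Finset (Sym2 V), F.card = n ∧ (F : Set (Sym2 V)) ⊆ G.edgeSet ∧
    ¬ (G.deleteEdges (F : Set (Sym2 V))).Connected}

/-- Amply regular graph with parameters `(d, α, β)`. -/
def IsAmplyRegular [Fintype V] (G : SimpleGraph V) (d α β : ℕ) : Prop :=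
  G.IsRegularOfDegree d ∧
  (∀ u v, G.Adj u v → (G.neighborFinset u ∩ G.neighborFinset v).card = α) ∧
  (∀ u v : V, G.dist u v = 2 → (G.neighborFinset u ∩ G.neighborFinset v).card = β)

/-- A matching given as a finite set of ordered pairs satisfying a constraint `P`. -/
def IsPairMatching (P : V → V → Prop) (M : Finset (V × V)) : Prop :=
  (∀ e ∈ M, P e.1 e.2) ∧
  ∀ e ∈ M, ∀ f ∈ M, e ≠ f → e.1 ≠ f.1 ∧ e.1 ≠ f.2 ∧ e.2 ≠ f.1 ∧ e.2 ≠ f.2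

/-! ### The Laplacian and the measures `μ_x^p` -/

/-- The normalized graph Laplacian `Δf(x) = (1 / d_x) ∑_{z ~ x} (f z - f x)`,
with value `0` at isolated vertices. -/
noncomputable def lap [Fintype V] (G : SimpleGraph V) (f : V → ℝ) (x : V) : ℝ :=
  (∑ z ∈ G.neighborFinset x, (f z - f x)) / G.degree x

theorem sum_mul_muP [Fintype V] (G : SimpleGraph V) (p : ℝ) (x : V)
    (hx : 0 < G.degree x) (f : V → ℝ) :
    ∑ z, f z * muP G p x z = f x + (1 - p) * lap G f x := by
  have hd : (G.degree x : ℝ) ≠ 0 := by positivity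
  have h : ∀ z, f z * muP G p x z = (if z = x then p * f z else 0) +
      (if z ∈ G.neighborFinset x then (1 - p) / G.degree x * f z else 0) := by
    intro z
    by_cases hz : z = x
    · subst hz
      simp [muP, mul_comm]
    · by_cases ha : G.Adj x z <;> simp [muP, hz, ha, mul_comm]
  rw [Finset.sum_congr rfl (fun z _ => h z), Finset.sum_add_distrib]
  rw [Finset.sum_ite_eq' Finset.univ x, Finset.sum_ite_mem, Finset.univ_inter,
    ← Finset.mul_sum, lap, Finset.sum_sub_distrib]
  simp only [Finset.mem_univ, if_true, Finset.sum_const, nsmul_eq_mul,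
    SimpleGraph.card_neighborFinset_eq_degree]
  field_simp
  ring

theorem sum_muP [Fintype V] (G : SimpleGraph V) (p : ℝ) (x : V) (hx : 0 < G.degree x) :
    ∑ z, muP G p x z = 1 := by
  have h := sum_mul_muP G p x hx (fun _ => 1)
  simpa [lap] using h

theorem muP_nonneg [Fintype V] (G : SimpleGraph V) {p : ℝ} (h0 : 0 ≤ p) (h1 : p ≤ 1) (x z : V) :
    0 ≤ muP G p x z := by
  unfold muP
  have : 0 ≤ 1 - p := by linarith
  split_ifs <;> positivity

theorem muP_le_one [Fintype V] (G : SimpleGraph V) {p : ℝ} (h0 : 0 ≤ p) (h1 : p ≤ 1) (x z : V)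
    (hx : 0 < G.degree x) : muP G p x z ≤ 1 := by
  rw [← sum_muP G p x hx]
  exact Finset.single_le_sum (fun z _ => muP_nonneg G h0 h1 x z) (Finset.mem_univ z)

/-! ### Wasserstein distance -/

/-- The product measure witnesses that transport plans between the measures `μ_x^p` and `μ_y^p`
exist, so that the infimum defining `Wdist` is not a junk value. -/
theorem plans_nonempty [Fintype V] (G : SimpleGraph V) {p : ℝ} (h0 : 0 ≤ p) (h1 : p ≤ 1) (x y : V)
    (hx : 0 < G.degree x) (hy : 0 < G.degree y) :
    {c : ℝ | ∃ π, IsTransportPlan (muP G p x) (muP G p y) π ∧ c = planCost G π}.Nonempty := by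
  refine ⟨_, fun u v => muP G p x u * muP G p y v, ⟨fun u v => ⟨?_, ?_⟩, fun u => ?_, fun v => ?_⟩,
    rfl⟩
  · exact mul_nonneg (muP_nonneg G h0 h1 x u) (muP_nonneg G h0 h1 y v)
  · exact mul_le_one₀ (muP_le_one G h0 h1 x u hx) (muP_nonneg G h0 h1 y v)
      (muP_le_one G h0 h1 y v hy)
  · rw [← Finset.mul_sum, sum_muP G p y hy, mul_one]
  · rw [← Finset.sum_mul, sum_muP G p x hx, one_mul]

theorem planCost_nonneg [Fintype V] (G : SimpleGraph V) {μ ν : V → ℝ} {π : V → V → ℝ}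
    (h : IsTransportPlan μ ν π) : 0 ≤ planCost G π :=
  Finset.sum_nonneg fun u _ => Finset.sum_nonneg fun v _ =>
    mul_nonneg (Nat.cast_nonneg _) (h.1 u v).1

theorem Wdist_le_planCost [Fintype V] (G : SimpleGraph V) {μ ν : V → ℝ} {π : V → V → ℝ}
    (h : IsTransportPlan μ ν π) : Wdist G μ ν ≤ planCost G π := by
  refine csInf_le ⟨0, ?_⟩ ⟨π, h, rfl⟩
  rintro c ⟨π', h', rfl⟩
  exact planCost_nonneg G h'

/-- A function varying by at most `1` along edges is `1`-Lipschitz. -/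
theorem sub_le_dist (G : SimpleGraph V) (hG : G.Connected) {f : V → ℝ}
    (hf : ∀ u v, G.Adj u v → f u - f v ≤ 1) (u v : V) : f u - f v ≤ G.dist u v := by
  have key : ∀ {u v : V} (w : G.Walk u v), f u - f v ≤ w.length := by
    intro u v w
    induction w with
    | nil => simp
    | cons h w ih =>
      have := hf _ _ h
      push_cast [SimpleGraph.Walk.length_cons]
      linarith
  obtain ⟨w, hw⟩ := hG.exists_walk_length_eq_dist u v
  rw [← hw]
  exact key w

/-- The easy half of Kantorovich duality. -/
theorem dual_le_planCost [Fintype V] (G : SimpleGraph V) {f : V → ℝ}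
    (hf : ∀ u v, f u - f v ≤ G.dist u v) {μ ν : V → ℝ} {π : V → V → ℝ}
    (h : IsTransportPlan μ ν π) : ∑ u, f u * μ u - ∑ v, f v * ν v ≤ planCost G π := by
  have h1 : ∑ u, f u * μ u = ∑ u, ∑ v, f u * π u v := by
    simp only [← Finset.mul_sum, h.2.1]
  have h2 : ∑ v, f v * ν v = ∑ u, ∑ v, f v * π u v := by
    rw [Finset.sum_comm]
    simp only [← Finset.mul_sum, h.2.2]
  rw [h1, h2, ← Finset.sum_sub_distrib]
  refine Finset.sum_le_sum fun u _ => ?_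
  rw [← Finset.sum_sub_distrib]
  refine Finset.sum_le_sum fun v _ => ?_
  rw [← sub_mul]
  exact mul_le_mul_of_nonneg_right (hf u v) (h.1 u v).1

theorem muP_mix [Fintype V] (G : SimpleGraph V) (t p : ℝ) (x z : V) :
    t * muP G p x z + (if z = x then 1 - t else 0) = muP G (t * p + (1 - t)) x z := by
  unfold muP
  split_ifs <;> ring

/-- Convexity of `p ↦ W(μ_x^p, μ_y^p)` towards the endpoint `p = 1`: a plan for `p` mixed with the
transport of the point mass at `x` to `y` is a plan for any larger idleness. -/
theorem Wdist_mix_le [Fintype V] (G : SimpleGraph V) {p t : ℝ} (h0 : 0 ≤ p) (h1 : p ≤ 1)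
    (ht0 : 0 < t) (ht1 : t ≤ 1) (x y : V) (hx : 0 < G.degree x) (hy : 0 < G.degree y) :
    Wdist G (muP G (t * p + (1 - t)) x) (muP G (t * p + (1 - t)) y) ≤
      t * Wdist G (muP G p x) (muP G p y) + (1 - t) * G.dist x y := by
  have hmain : (Wdist G (muP G (t * p + (1 - t)) x) (muP G (t * p + (1 - t)) y)
      - (1 - t) * G.dist x y) / t ≤ Wdist G (muP G p x) (muP G p y) := by
    refine le_csInf (plans_nonempty G h0 h1 x y hx hy) ?_
    rintro c ⟨π, hπ, rfl⟩
    have hplan : IsTransportPlan (muP G (t * p + (1 - t)) x) (muP G (t * p + (1 - t)) y)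
        (fun u v => t * π u v + (if u = x then if v = y then 1 - t else 0 else 0)) := by
      refine ⟨fun u v => ⟨?_, ?_⟩, fun u => ?_, fun v => ?_⟩
      · have := mul_nonneg ht0.le (hπ.1 u v).1
        beta_reduce
        split_ifs <;> linarith
      · have := mul_le_mul_of_nonneg_left (hπ.1 u v).2 ht0.le
        beta_reduce
        split_ifs <;> linarith
      · rw [Finset.sum_add_distrib, ← Finset.mul_sum, hπ.2.1, ← muP_mix]
        by_cases hu : u = x <;> simp [hu]
      · rw [Finset.sum_add_distrib, ← Finset.mul_sum, hπ.2.2, ← muP_mix]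
        by_cases hv : v = y <;> simp [hv]
    have hcost : planCost G (fun u v => t * π u v +
        (if u = x then if v = y then 1 - t else 0 else 0)) =
        t * planCost G π + (1 - t) * G.dist x y := by
      unfold planCost
      simp only [mul_add, Finset.sum_add_distrib, Finset.mul_sum]
      congr 1
      · refine Finset.sum_congr rfl fun u _ => Finset.sum_congr rfl fun v _ => ?_
        ring
      · rw [Finset.sum_eq_single x, Finset.sum_eq_single y]
        · simp [mul_comm]
        · intro v _ hv
          simp [hv]
        · simp
        · intro u _ hu
          simp [hu]
        · simp
    have := Wdist_le_planCost G hplan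
    rw [hcost] at this
    rw [div_le_iff₀ ht0]
    linarith
  rw [div_le_iff₀ ht0] at hmain
  linarith

/-! ### Lin-Lu-Yau curvature -/

/-- The quotient whose limit as `p → 1` is the Lin-Lu-Yau curvature of `x` and `y`. -/
noncomputable def kappaQuot [Fintype V] (G : SimpleGraph V) (x y : V) (p : ℝ) : ℝ :=
  (1 - Wdist G (muP G p x) (muP G p y) / (G.dist x y)) / (1 - p)

theorem kappaQuot_mono [Fintype V] (G : SimpleGraph V) {x y : V} (hxy : G.Adj x y) {p q : ℝ}
    (h0 : 0 ≤ p) (hpq : p ≤ q) (hq : q < 1) : kappaQuot G x y p ≤ kappaQuot G x y q := by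
  have hx : 0 < G.degree x := (G.degree_pos_iff_exists_adj x).2 ⟨y, hxy⟩
  have hy : 0 < G.degree y := (G.degree_pos_iff_exists_adj y).2 ⟨x, hxy.symm⟩
  have hd : G.dist x y = 1 := SimpleGraph.dist_eq_one_iff_adj.2 hxy
  have hp' : 0 < 1 - p := by linarith
  have hq' : 0 < 1 - q := by linarith
  have h := Wdist_mix_le G h0 (by linarith) (t := (1 - q) / (1 - p)) (div_pos hq' hp')
    ((div_le_one hp').2 (by linarith)) x y hx hy
  have e : (1 - q) / (1 - p) * p + (1 - (1 - q) / (1 - p)) = q := by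
    field_simp
    ring
  rw [e, hd] at h
  simp only [kappaQuot, hd, Nat.cast_one, div_one]
  rw [le_div_iff₀ hq']
  have e2 : (1 - Wdist G (muP G p x) (muP G p y)) / (1 - p) * (1 - q) =
      (1 - q) / (1 - p) * (1 - Wdist G (muP G p x) (muP G p y)) := by ring
  rw [e2]
  push_cast at h
  linarith

theorem kappaQuot_le [Fintype V] (G : SimpleGraph V) (hG : G.Connected) {x y : V}
    (hxy : G.Adj x y) {f : V → ℝ} (hf : ∀ u v, G.Adj u v → f u - f v ≤ 1) (hfxy : f x - f y = 1)
    {p : ℝ} (h0 : 0 ≤ p) (h1 : p < 1) : kappaQuot G x y p ≤ lap G f y - lap G f x := by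
  have hx : 0 < G.degree x := (G.degree_pos_iff_exists_adj x).2 ⟨y, hxy⟩
  have hy : 0 < G.degree y := (G.degree_pos_iff_exists_adj y).2 ⟨x, hxy.symm⟩
  have hd : G.dist x y = 1 := SimpleGraph.dist_eq_one_iff_adj.2 hxy
  have hW : f x + (1 - p) * lap G f x - (f y + (1 - p) * lap G f y) ≤
      Wdist G (muP G p x) (muP G p y) := by
    refine le_csInf (plans_nonempty G h0 h1.le x y hx hy) ?_
    rintro c ⟨π, hπ, rfl⟩
    rw [← sum_mul_muP G p x hx f, ← sum_mul_muP G p y hy f]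
    exact dual_le_planCost G (sub_le_dist G hG hf) hπ
  have hp' : 0 < 1 - p := by linarith
  simp only [kappaQuot, hd, Nat.cast_one, div_one]
  rw [div_le_iff₀ hp']
  linarith

/-- The curvature of an edge is at most the drop of the Laplacian of any `1`-Lipschitz function
of slope `1` along it. Monotonicity and boundedness of the quotients give existence of the limit,
without which `limUnder` would be a junk value. -/
theorem kappaLLY_le [Fintype V] (G : SimpleGraph V) (hG : G.Connected) {x y : V}
    (hxy : G.Adj x y) {f : V → ℝ} (hf : ∀ u v, G.Adj u v → f u - f v ≤ 1)
    (hfxy : f x - f y = 1) : kappaLLY G x y ≤ lap G f y - lap G f x := by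
  -- The quotient is only controlled for `p ≥ 0`, hence the truncation.
  let g : ℝ → ℝ := fun p => kappaQuot G x y (max p 0)
  have hmono : MonotoneOn g (Set.Iio 1) := by
    intro p _ q hq hpq
    exact kappaQuot_mono G hxy (le_max_right _ _) (max_le_max_right 0 hpq)
      (max_lt hq one_pos)
  have hle : ∀ p < 1, g p ≤ lap G f y - lap G f x := fun p hp =>
    kappaQuot_le G hG hxy hf hfxy (le_max_right _ _) (max_lt hp one_pos)
  have hbdd : BddAbove (g '' Set.Iio 1) := by
    refine ⟨lap G f y - lap G f x, ?_⟩
    rintro _ ⟨p, hp, rfl⟩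
    exact hle p hp
  have htend := hmono.tendsto_nhdsLT hbdd
  have heq : g =ᶠ[nhdsWithin 1 (Set.Iio (1 : ℝ))] kappaQuot G x y := by
    have : ∀ᶠ p in nhdsWithin 1 (Set.Iio (1 : ℝ)), (0 : ℝ) < p :=
      nhdsWithin_le_nhds (lt_mem_nhds one_pos)
    filter_upwards [this] with p hp
    simp [g, max_eq_left hp.le]
  have hlim : kappaLLY G x y = sSup (g '' Set.Iio 1) := (htend.congr' heq).limUnder_eq
  rw [hlim]
  refine csSup_le ⟨_, 0, by simp, rfl⟩ ?_
  rintro _ ⟨p, hp, rfl⟩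
  exact hle p hp

theorem kappaLLYedge_le [Fintype V] (G : SimpleGraph V) {x y : V} (hxy : G.Adj x y) :
    kappaLLYedge G ≤ kappaLLY G x y := by
  refine csInf_le (Set.Finite.bddBelow ?_) ⟨x, y, hxy, rfl⟩
  refine (Set.finite_range (fun e : V × V => kappaLLY G e.1 e.2)).subset ?_
  rintro _ ⟨a, b, _, rfl⟩
  exact ⟨(a, b), rfl⟩

/-! ### Minimum vertex cuts -/

/-- In a connected graph an edge leaves every proper nonempty vertex set. -/
theorem exists_boundary {W : Type*} {H : SimpleGraph W} (hH : H.Connected) (P : W → Prop) {a b : W}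
    (ha : P a) (hb : ¬ P b) : ∃ u v, H.Adj u v ∧ P u ∧ ¬ P v := by
  obtain ⟨w⟩ := hH.preconnected a b
  obtain ⟨d, _, h1, h2⟩ := w.exists_boundary_dart {z | P z} ha hb
  exact ⟨_, _, d.adj, h1, h2⟩

/-- In a non-complete graph the connectivity is attained by a set whose removal leaves a
disconnected graph, rather than by one leaving at most one vertex. -/
theorem exists_min_cut [Fintype V] (G : SimpleGraph V) (hnc : G ≠ ⊤) :
    ∃ S : Finset V, S.card = vertexConnectivity G ∧
      ¬ (G.induce ((S : Set V)ᶜ)).Connected ∧ ((S : Set V)ᶜ).Nonempty := by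
  obtain ⟨x, y, hxy, hadj⟩ : ∃ x y : V, x ≠ y ∧ ¬ G.Adj x y := by
    by_contra! h
    refine hnc ?_
    ext a b
    exact ⟨fun hab => hab.ne, fun hab => h a b hab⟩
  have hpair : ¬ (G.induce (((({x, y} : Finset V)ᶜ : Finset V) : Set V)ᶜ)).Connected := by
    intro h
    obtain ⟨u, v, huv, hu, hv⟩ := exists_boundary h (fun z => (z : V) = x)
      (a := ⟨x, by simp⟩) (b := ⟨y, by simp⟩) rfl hxy.symm
    have hv' : (v : V) = y := by
      have := v.2
      simp at this
      tauto
    have huv' : G.Adj u v := huv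
    rw [hu, hv'] at huv'
    exact hadj huv'
  have hmem : (({x, y} : Finset V)ᶜ).card ∈ {n : ℕ | ∃ S : Finset V, S.card = n ∧
      (¬ (G.induce ((S : Set V)ᶜ)).Connected ∨ ((S : Set V)ᶜ).Subsingleton)} :=
    ⟨_, rfl, Or.inl hpair⟩
  obtain ⟨S, hS, h⟩ := Nat.sInf_mem ⟨_, hmem⟩
  have hle : S.card ≤ (({x, y} : Finset V)ᶜ).card := hS.trans_le (Nat.sInf_le hmem)
  have h1 := Finset.card_add_card_compl S
  have h2 := Finset.card_add_card_compl ({x, y} : Finset V)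
  rw [Finset.card_pair hxy] at h2
  have hc : 1 < (Sᶜ).card := by omega
  obtain ⟨a, ha, b, hb, hab⟩ := Finset.one_lt_card.1 hc
  have ha' : a ∈ ((S : Set V)ᶜ) := by simpa using ha
  have hb' : b ∈ ((S : Set V)ᶜ) := by simpa using hb
  refine ⟨S, hS, ?_, a, ha'⟩
  rcases h with h | h
  · exact h
  · exact absurd (h ha' hb') (by exact hab)

/-- The complement of a minimum cut `S` splits into sets `A` and `B` with no edges between them,
and some vertex of `S` has neighbours on both sides. -/
theorem exists_cut_structure [Fintype V] (G : SimpleGraph V) (hG : G.Connected) (hnc : G ≠ ⊤) :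
    ∃ (S : Finset V) (A B : Set V) (x s y : V), S.card = vertexConnectivity G ∧
      (∀ v, v ∈ S ∨ v ∈ A ∨ v ∈ B) ∧ (∀ v ∈ A, v ∉ B) ∧ (∀ v ∈ S, v ∉ A ∧ v ∉ B) ∧
      (∀ u ∈ A, ∀ v ∈ B, ¬ G.Adj u v) ∧
      x ∈ A ∧ s ∈ S ∧ y ∈ B ∧ G.Adj x s ∧ G.Adj s y := by
  obtain ⟨S, hS, hdis, hne⟩ := exists_min_cut G hnc
  have hpre : ¬ (G.induce ((S : Set V)ᶜ)).Preconnected := fun h =>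
    hdis ((SimpleGraph.connected_iff _).2 ⟨h, hne.to_subtype⟩)
  simp only [SimpleGraph.Preconnected, not_forall] at hpre
  obtain ⟨a, b, hab⟩ := hpre
  let A : Set V := {v | ∃ h : v ∈ ((S : Set V)ᶜ), (G.induce ((S : Set V)ᶜ)).Reachable a ⟨v, h⟩}
  let B : Set V := {v | v ∉ S ∧ v ∉ A}
  have haA : (a : V) ∈ A := ⟨a.2, SimpleGraph.Reachable.refl _⟩
  have hbA : (b : V) ∉ A := fun ⟨_, h⟩ => hab h
  have hSA : ∀ v ∈ A, v ∉ S := fun v ⟨h, _⟩ => by simpa using h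
  have hAB : ∀ u ∈ A, ∀ v ∈ B, ¬ G.Adj u v := by
    rintro u ⟨hu, hr⟩ v ⟨hvS, hvA⟩ huv
    have hv : v ∈ ((S : Set V)ᶜ) := by simpa using hvS
    refine hvA ⟨hv, hr.trans (SimpleGraph.Adj.reachable ?_)⟩
    exact huv
  obtain ⟨x, s, hxs, hx, hs⟩ := exists_boundary hG (· ∈ A) haA hbA
  have hsS : s ∈ S := by
    by_contra h
    exact hAB x hx s ⟨h, hs⟩ hxs
  -- By minimality of `S`, removing only `S \ {s}` keeps the graph connected.
  have hconn : (G.induce (((S.erase s : Finset V) : Set V)ᶜ)).Connected := by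
    by_contra h
    have : vertexConnectivity G ≤ (S.erase s).card := Nat.sInf_le ⟨_, rfl, Or.inl h⟩
    have := Finset.card_erase_lt_of_mem hsS
    omega
  have hbS : (b : V) ∉ S := fun h => b.2 h
  have haS : (a : V) ∉ S := fun h => a.2 h
  obtain ⟨u, v, huv, hu, hv⟩ := exists_boundary hconn (fun z => (z : V) ∈ A ∨ (z : V) = s)
    (a := ⟨a, by simp [haS]⟩) (b := ⟨b, by simp [hbS]⟩) (Or.inl haA)
    (by rintro (h | h); exacts [hbA h, hbS (h ▸ hsS)])
  have huv' : G.Adj u v := huv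
  push Not at hv
  have hvB : (v : V) ∈ B := by
    refine ⟨fun h => ?_, hv.1⟩
    have := v.2
    simp [hv.2, h] at this
  have hus : (u : V) = s := hu.resolve_left fun h => hAB _ h _ hvB huv'
  refine ⟨S, A, B, x, s, v, hS, fun w => ?_, fun w h h' => h'.2 h,
    fun w h => ⟨fun h' => hSA w h' h, fun h' => h'.1 h⟩, hAB, hx, hsS, hvB, hxs, by rwa [hus] at huv'⟩
  by_cases h1 : w ∈ S
  · exact Or.inl h1
  by_cases h2 : w ∈ A
  · exact Or.inr (Or.inl h2)
  · exact Or.inr (Or.inr ⟨h1, h2⟩)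

/-! ### The curvature bound -/

/-- If `f` drops from `x` only towards `S`, and there by at most `1`, then
`Δf(x) ≥ -|S| / δ(G)`. -/
theorem neg_card_div_le_lap [Fintype V] (G : SimpleGraph V) (hδ : 0 < G.minDegree) (S : Finset V)
    (f : V → ℝ) (x : V) (h : ∀ z, G.Adj x z → -(if z ∈ S then 1 else 0) ≤ f z - f x) :
    -((S.card : ℝ) / G.minDegree) ≤ lap G f x := by
  have hle : G.minDegree ≤ G.degree x := G.minDegree_le_degree x
  have hd : (0 : ℝ) < G.degree x := by exact_mod_cast hδ.trans_le hle
  have hsum : -(S.card : ℝ) ≤ ∑ z ∈ G.neighborFinset x, (f z - f x) := by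
    calc -(S.card : ℝ) ≤ ∑ z ∈ G.neighborFinset x, -(if z ∈ S then (1 : ℝ) else 0) := by
          rw [Finset.sum_neg_distrib, neg_le_neg_iff, Finset.sum_ite_mem, Finset.sum_const,
            nsmul_eq_mul, mul_one]
          exact_mod_cast Finset.card_le_card Finset.inter_subset_right
      _ ≤ _ := Finset.sum_le_sum fun z hz => h z (by simpa using hz)
  calc -((S.card : ℝ) / G.minDegree) ≤ -((S.card : ℝ) / G.degree x) := by
        apply neg_le_neg
        gcongr
    _ = -(S.card : ℝ) / G.degree x := by ring
    _ ≤ _ := by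
        unfold lap
        gcongr

theorem lap_neg [Fintype V] (G : SimpleGraph V) (f : V → ℝ) (x : V) :
    lap G (fun z => -f z) x = -lap G f x := by
  unfold lap
  rw [← neg_div, ← Finset.sum_neg_distrib]
  congr 1
  exact Finset.sum_congr rfl fun z _ => by ring

/-- For a finite non-complete connected simple graph,
`k(G) ≥ δ(G) · κ_LLY(G)`. -/
theorem connectivity_ge_minDegree_mul_kappaLLY
    {V : Type*} [Fintype V] (G : SimpleGraph V)
    (hconn : G.Connected) (hnc : G ≠ ⊤) :
    (G.minDegree : ℝ) * kappaLLYedge G ≤ (vertexConnectivity G : ℝ) := by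
  rcases Nat.eq_zero_or_pos G.minDegree with hδ | hδ
  · simp [hδ]
  obtain ⟨S, A, B, x, s, y, hS, hcov, hdisj, hSAB, hAB, hx, hs, hy, hxs, hsy⟩ :=
    exists_cut_structure G hconn hnc
  let f : V → ℝ := fun v => if v ∈ A then 1 else if v ∈ B then -1 else 0
  have fA : ∀ v ∈ A, f v = 1 := fun v h => by simp [f, h]
  have fB : ∀ v ∈ B, f v = -1 := fun v h => by
    have : v ∉ A := fun h' => hdisj v h' h
    simp [f, h, this]
  have fS : ∀ v ∈ S, f v = 0 := fun v h => by simp [f, hSAB v h]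
  have hlip : ∀ u v, G.Adj u v → f u - f v ≤ 1 := by
    intro u v huv
    rcases hcov u with hu | hu | hu <;> rcases hcov v with hv | hv | hv
    all_goals first
      | exact absurd huv (hAB _ hu _ hv)
      | simp only [fA, fB, fS, hu, hv]; norm_num
  have k1 : kappaLLYedge G ≤ lap G f s - lap G f x :=
    (kappaLLYedge_le G hxs).trans
      (kappaLLY_le G hconn hxs hlip (by rw [fA x hx, fS s hs]; norm_num))
  have k2 : kappaLLYedge G ≤ lap G f y - lap G f s :=
    (kappaLLYedge_le G hsy).trans
      (kappaLLY_le G hconn hsy hlip (by rw [fS s hs, fB y hy]; norm_num))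
  have bx : -((S.card : ℝ) / G.minDegree) ≤ lap G f x := by
    refine neg_card_div_le_lap G hδ S f x fun z hz => ?_
    rcases hcov z with h | h | h
    · simp [h, fS, fA x hx]
    · have : z ∉ S := fun h' => (hSAB z h').1 h
      simp [this, fA z h, fA x hx]
    · exact absurd hz (hAB x hx z h)
  have bY : -((S.card : ℝ) / G.minDegree) ≤ lap G (fun z => -f z) y := by
    refine neg_card_div_le_lap G hδ S _ y fun z hz => ?_
    rcases hcov z with h | h | h
    · simp [h, fS, fB y hy]
    · exact absurd hz.symm (hAB z h y hy)
    · have : z ∉ S := fun h' => (hSAB z h').2 h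
      simp [this, fB z h, fB y hy]
  rw [lap_neg] at bY
  have hfin : kappaLLYedge G ≤ (S.card : ℝ) / G.minDegree := by linarith
  rw [le_div_iff₀ (by exact_mod_cast hδ)] at hfin
  rw [← hS, mul_comm]
  exact hfin
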